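/- For every integer n ≥ 7, the averaged-prime analogue of the Farhadian conjecture holds: (p̄_{n+1} / p̄_n)^n < (p_n / (2·ln p_n)) · ln(n/2). -/

import Mathlib

open Finset Real

/-- `nthPrime n` is the n-th prime number with 1-based indexing:
`nthPrime 1 = 2`, `nthPrime 2 = 3`, `nthPrime 3 = 5`, ... -/
noncomputable def nthPrime (n : ℕ) : ℕ := Nat.nth Nat.Prime (n - 1)

/-- The arithmetic average of the first `n` primes. -/
noncomputable def avgPrime (n : ℕ) : ℝ := (1 / (n : ℝ)) * ∑ i ∈ Finset.Icc 1 n, (nthPrime i : ℝ)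

/-- The gap in the averaged primes. -/
noncomputable def avgGap (n : ℕ) : ℝ := avgPrime (n + 1) - avgPrime n

/-- The averaged-prime counting function `π̄(x) = #{i ≥ 1 : p̄_i ≤ x}`. -/
noncomputable def avgPrimeCount (x : ℝ) : ℕ := Nat.card {i : ℕ | 1 ≤ i ∧ avgPrime i ≤ x}

/-- The ordinary prime counting function for a real argument. -/
noncomputable def primeCount (x : ℝ) : ℕ := Nat.card {q : ℕ | q.Prime ∧ (q : ℝ) ≤ x}

/-!
Write `p = p_n`, `q = p_{n+1}` and `S = p_1 + ⋯ + p_n`. The value `p / 5` separates the two sides: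

* `(p̄_{n+1} / p̄_n) ^ n = (1 + q / S) ^ n / (1 + 1 / n) ^ n ≤ exp (n * q / S) / 2`, and this is
  less than `p / 5` once `n * q / S < log (2 * p / 5)`. Chebyshev's lower bound for `π` and
  Bertrand's postulate give `q ≲ n * log p / log 2`, whereas at most `8` residues modulo `30`
  contain primes greater than `5`, so that `p_k ≳ 15 * k / 4` and `S ≳ 15 * n ^ 2 / 8`. Since
  `8 / (15 * log 2) < 1`, the inequality holds for large `n`, and `n ≥ 300` suffices.
* `p / 5` is at most the right-hand side as soon as `p ^ 2 ≤ (n / 2) ^ 5`, which for `n ≥ 35` again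
  follows from Chebyshev's bound.

For `7 ≤ n < 300` both inequalities are cleared of denominators and evaluated
along the list of primes below `2025`.
-/

/-! ### Elementary inequalities -/

theorem two_le_one_add_one_div_pow {n : ℕ} (hn : n ≠ 0) : (2 : ℝ) ≤ (1 + 1 / (n : ℝ)) ^ n := by
  have hinv : (0 : ℝ) ≤ 1 / (n : ℝ) := by positivity
  calc (2 : ℝ) = 1 + n * (1 / (n : ℝ)) := by field_simp; norm_num
    _ ≤ (1 + 1 / (n : ℝ)) ^ n := one_add_mul_le_pow (by linarith) n

theorem one_add_pow_le_exp_mul {x : ℝ} (hx : 0 ≤ x) (n : ℕ) : (1 + x) ^ n ≤ exp (n * x) := by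
  rw [exp_nat_mul, add_comm]
  gcongr
  exact add_one_le_exp x

theorem log_five_halves_lt : log (5 / 2) < 11 / 12 := by
  have hpow : (5 / 2 : ℝ) ^ 12 < exp 11 := by
    calc (5 / 2 : ℝ) ^ 12 < 2.7182818283 ^ 11 := by norm_num
      _ ≤ exp 1 ^ 11 := by gcongr; exact exp_one_gt_d9.le
      _ = exp 11 := by rw [← exp_nat_mul]; norm_num
  have hlog := (log_lt_iff_lt_exp (by positivity)).2 hpow
  rw [log_pow] at hlog
  push_cast at hlog
  linarith

theorem seven_le_log {x : ℝ} (hx : 1097 ≤ x) : 7 ≤ log x := by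
  rw [le_log_iff_exp_le (by linarith)]
  calc exp 7 = exp 1 ^ 7 := by rw [← exp_nat_mul]; norm_num
    _ ≤ 2.7182818286 ^ 7 := by gcongr; exact exp_one_lt_d9.le
    _ ≤ 1097 := by norm_num
    _ ≤ x := hx

theorem div_five_le_div_two_mul_log_mul_log {x y : ℝ} (hx : 1 < x) (h : x ^ 2 ≤ y ^ 5) :
    x / 5 ≤ x / (2 * log x) * log y := by
  have hlogx : 0 < log x := log_pos hx
  have hlog : 2 * log x ≤ 5 * log y := by
    simpa only [log_pow, Nat.cast_ofNat] using log_le_log (by positivity) h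
  calc x / 5 = x / (2 * log x) * (2 * log x / 5) := by field_simp
    _ ≤ x / (2 * log x) * log y := by gcongr; linarith

-- With `u = x ^ (1 / 4)`, the bound `log x = 4 * log u ≤ 4 * (u - 1)` lets `u - 1` cancel.
theorem pow_three_le_of_sub_one_mul_log_two_le {x a : ℝ} (hx : 1 < x)
    (h : (x - 1) * log 2 ≤ a * log x) : x ^ 3 ≤ (6 * a) ^ 4 := by
  obtain ⟨u, hu, rfl⟩ : ∃ u : ℝ, 1 < u ∧ u ^ 4 = x := by
    refine ⟨√√x, by simpa only [lt_sqrt zero_le_one, one_pow] using hx, ?_⟩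
    rw [show 4 = 2 * 2 from rfl, pow_mul, sq_sqrt (sqrt_nonneg x), sq_sqrt (by linarith)]
  have hlog2 : 2 / 3 < log 2 := by linarith [log_two_gt_d9]
  have hlog : log (u ^ 4) ≤ 4 * (u - 1) := by
    rw [log_pow, Nat.cast_ofNat]
    linarith [log_le_sub_one_of_pos (zero_lt_one.trans hu)]
  have ha : 0 ≤ a := by
    have hpos : 0 < a * log (u ^ 4) := lt_of_lt_of_le (by nlinarith) h
    exact (pos_of_mul_pos_left hpos (log_pos hx).le).le
  have hcancel : (u ^ 3 + u ^ 2 + u + 1) * log 2 ≤ 4 * a := by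
    refine le_of_mul_le_mul_right ?_ (sub_pos.2 hu)
    calc (u ^ 3 + u ^ 2 + u + 1) * log 2 * (u - 1) = (u ^ 4 - 1) * log 2 := by ring
      _ ≤ a * log (u ^ 4) := h
      _ ≤ a * (4 * (u - 1)) := by gcongr
      _ = 4 * a * (u - 1) := by ring
  have hu3 : u ^ 3 ≤ 6 * a := by
    have hle : u ^ 3 * (2 / 3) ≤ (u ^ 3 + u ^ 2 + u + 1) * log 2 := by
      gcongr
      linarith [sq_nonneg u]
    linarith
  calc (u ^ 4) ^ 3 = (u ^ 3) ^ 4 := by ring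
    _ ≤ (6 * a) ^ 4 := by gcongr

/-! ### Bounds for the `n`-th prime -/

theorem nthPrime_prime (n : ℕ) : (nthPrime n).Prime := Nat.prime_nth_prime _

theorem count_prime_nthPrime_succ (n : ℕ) : Nat.count Nat.Prime (nthPrime (n + 1)) = n :=
  Nat.count_nth_of_infinite Nat.infinite_setOfPred_prime n

theorem le_nthPrime_succ_iff {m n : ℕ} : m ≤ nthPrime (n + 1) ↔ Nat.count Nat.Prime m ≤ n :=
  (Nat.count_le_iff_le_nth Nat.infinite_setOfPred_prime).symm

theorem nthPrime_succ_le_two_mul {n : ℕ} (hn : n ≠ 0) : nthPrime (n + 1) ≤ 2 * nthPrime n := by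
  obtain ⟨k, rfl⟩ := Nat.exists_eq_succ_of_ne_zero hn
  obtain ⟨r, hr, hlt, hle⟩ :=
    Nat.exists_prime_lt_and_le_two_mul (nthPrime (k + 1)) (nthPrime_prime _).ne_zero
  refine le_trans ?_ hle
  by_contra! hgap
  exact hlt.not_ge (Nat.le_nth_of_lt_nth_succ hgap hr)

theorem nthPrime_sub_one_mul_log_two_le {n : ℕ} (hn : n ≠ 0) :
    ((nthPrime n : ℝ) - 1) * log 2 ≤ n * log (nthPrime n) := by
  obtain ⟨k, rfl⟩ := Nat.exists_eq_succ_of_ne_zero hn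
  obtain ⟨m, hm⟩ := Nat.exists_eq_add_one_of_ne_zero (nthPrime_prime (k + 1)).ne_zero
  have hm1 : 1 ≤ m := by have := (nthPrime_prime (k + 1)).two_le; lia
  have hpi : Nat.primeCounting m = k := by
    rw [Nat.primeCounting, Nat.primeCounting', ← hm, count_prime_nthPrime_succ]
  have hpsi : m * log 2 - log (m + 1) ≤ k * log m :=
    hpi ▸ (Chebyshev.psi_ge m).trans (Chebyshev.psi_le_primeCounting_mul_log m)
  have hmono : k * log m ≤ k * log (m + 1) := by gcongr; linarith
  rw [hm]
  push_cast
  linarith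

-- Every prime in `[p_n, p_n + a)` is one of the `φ a` integers there that are coprime to `a`.
theorem nthPrime_add_le_nthPrime_add_totient {a n : ℕ} (hn : n ≠ 0)
    (ha : ∀ r, r.Prime → r ∣ a → r < nthPrime n) :
    nthPrime n + a ≤ nthPrime (n + a.totient) := by
  obtain ⟨k, rfl⟩ := Nat.exists_eq_succ_of_ne_zero hn
  rw [Nat.succ_eq_add_one, add_right_comm, le_nthPrime_succ_iff, Nat.count_eq_card_filter_range]
  set p := nthPrime (k + 1)
  have hcount : #{r ∈ range p | r.Prime} = k := by
    rw [← Nat.count_eq_card_filter_range, count_prime_nthPrime_succ]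
  have hsub : {r ∈ range (p + a) | r.Prime} ⊆
      {r ∈ range p | r.Prime} ∪ {r ∈ Ico p (p + a) | a.Coprime r} := by
    intro r hr
    simp only [mem_filter, mem_range, mem_union, mem_Ico] at hr ⊢
    refine (lt_or_ge r p).imp (fun h => ⟨h, hr.2⟩) fun h => ⟨⟨h, hr.1⟩, ?_⟩
    rw [Nat.coprime_comm, hr.2.coprime_iff_not_dvd]
    exact fun hdvd => h.not_gt (ha r hr.2 hdvd)
  calc #{r ∈ range (p + a) | r.Prime}
      ≤ #{r ∈ range p | r.Prime} + #{r ∈ Ico p (p + a) | a.Coprime r} :=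
        (card_le_card hsub).trans (card_union_le _ _)
    _ = k + a.totient := by rw [hcount, Nat.filter_coprime_Ico_eq_totient]

theorem nthPrime_add_thirty_le {n : ℕ} (hn : 4 ≤ n) : nthPrime n + 30 ≤ nthPrime (n + 8) := by
  have h7 : 7 ≤ nthPrime n := by
    obtain ⟨k, rfl⟩ := Nat.exists_eq_add_of_le' (show 1 ≤ n by lia)
    have hcount : Nat.count Nat.Prime 7 = 3 := by decide
    exact le_nthPrime_succ_iff.2 (by lia)
  refine nthPrime_add_le_nthPrime_add_totient (a := 30) (by lia) fun r hr hdvd => ?_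
  have hle : ∀ s ≤ 30, s.Prime → s ∣ 30 → s ≤ 5 := by decide
  have := hle r (Nat.le_of_dvd (by norm_num) hdvd) hr hdvd
  lia

theorem fifteen_mul_le_four_mul_nthPrime_add (n : ℕ) : 15 * n ≤ 4 * nthPrime n + 44 := by
  induction n using Nat.strong_induction_on with
  | _ n ih =>
    rcases lt_or_ge n 12 with hlt | hge
    · rcases n with - | k
      · lia
      · have hcount : ∀ k < 11, Nat.count Nat.Prime ((15 * k - 26) / 4) ≤ k := by decide
        have := le_nthPrime_succ_iff.2 (hcount k (by lia))
        lia
    · obtain ⟨m, rfl⟩ := Nat.exists_eq_add_of_le' (show 8 ≤ n by lia)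
      have := nthPrime_add_thirty_le (show 4 ≤ m by lia)
      have := ih m (by lia)
      lia

theorem nthPrime_pow_three_le {n : ℕ} (hn : n ≠ 0) : nthPrime n ^ 3 ≤ (6 * n) ^ 4 := by
  have hp : (1 : ℝ) < nthPrime n := mod_cast (nthPrime_prime n).one_lt
  exact_mod_cast
    pow_three_le_of_sub_one_mul_log_two_le hp (nthPrime_sub_one_mul_log_two_le hn)

theorem nthPrime_sq_le_of_thirtyFive_le {n : ℕ} (hn : 35 ≤ n) : 32 * nthPrime n ^ 2 ≤ n ^ 5 := by
  have hcube := nthPrime_pow_three_le (show n ≠ 0 by lia)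
  refine (Nat.pow_le_pow_iff_left three_ne_zero).1 ?_
  calc (32 * nthPrime n ^ 2) ^ 3 = 32 ^ 3 * (nthPrime n ^ 3) ^ 2 := by ring
    _ ≤ 32 ^ 3 * ((6 * n) ^ 4) ^ 2 := by gcongr
    _ = 32 ^ 3 * 6 ^ 8 * n ^ 8 := by ring
    _ ≤ 35 ^ 7 * n ^ 8 := by gcongr; norm_num
    _ ≤ n ^ 7 * n ^ 8 := by gcongr
    _ = (n ^ 5) ^ 3 := by ring

theorem nthPrime_succ_le_log {n : ℕ} (hn : n ≠ 0) :
    (nthPrime (n + 1) : ℝ) ≤ 1 + (n + 1) * (1 + 1.45 * log (nthPrime n)) := by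
  have hp : (1 : ℝ) < nthPrime n := mod_cast (nthPrime_prime n).one_lt
  have hq : (0 : ℝ) < nthPrime (n + 1) := mod_cast (nthPrime_prime _).pos
  have hlog2 : 0.69 < log 2 := by linarith [log_two_gt_d9]
  have hlogp : 0 < log (nthPrime n) := log_pos hp
  have hlogq : log (nthPrime (n + 1)) ≤ log 2 + log (nthPrime n) := by
    rw [← log_mul two_ne_zero (by linarith)]
    exact log_le_log hq (mod_cast nthPrime_succ_le_two_mul hn)
  rw [← sub_le_iff_le_add']
  refine le_of_mul_le_mul_right ?_ (log_pos one_lt_two)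
  calc ((nthPrime (n + 1) : ℝ) - 1) * log 2
      ≤ (n + 1) * log (nthPrime (n + 1)) := mod_cast nthPrime_sub_one_mul_log_two_le n.succ_ne_zero
    _ ≤ (n + 1) * (log 2 + log (nthPrime n)) := by gcongr
    _ ≤ (n + 1) * ((1 + 1.45 * log (nthPrime n)) * log 2) := by gcongr; nlinarith
    _ = (n + 1) * (1 + 1.45 * log (nthPrime n)) * log 2 := by ring

/-! ### Sums and averages of primes -/

/-- The sum of the first `n` primes, as a natural number so that it can be computed. -/
noncomputable def primeSum (n : ℕ) : ℕ := ∑ i ∈ Icc 1 n, nthPrime i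

theorem primeSum_succ (n : ℕ) : primeSum (n + 1) = primeSum n + nthPrime (n + 1) :=
  sum_Icc_succ_top n.succ_pos _

theorem primeSum_pos {n : ℕ} (hn : n ≠ 0) : 0 < primeSum n := by
  obtain ⟨k, rfl⟩ := Nat.exists_eq_succ_of_ne_zero hn
  exact primeSum_succ k ▸ Nat.add_pos_right _ (nthPrime_prime _).pos

theorem fifteen_mul_sq_le_primeSum (n : ℕ) : 15 * n ^ 2 ≤ 8 * primeSum n + 73 * n := by
  induction n with
  | zero => lia
  | succ n ih =>
    have := fifteen_mul_le_four_mul_nthPrime_add (n + 1)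
    rw [primeSum_succ]
    linarith

theorem avgPrime_eq_primeSum_div (n : ℕ) : avgPrime n = primeSum n / n := by
  rw [avgPrime, primeSum, Nat.cast_sum, one_div_mul_eq_div]

theorem avgPrime_succ_div_avgPrime (n : ℕ) :
    avgPrime (n + 1) / avgPrime n =
      ((primeSum n + nthPrime (n + 1)) * n : ℝ) / (primeSum n * (n + 1)) := by
  rw [avgPrime_eq_primeSum_div, avgPrime_eq_primeSum_div, primeSum_succ, div_div_div_eq]
  push_cast
  ring

theorem mul_nthPrime_succ_div_primeSum_lt_log {n : ℕ} (hn : 300 ≤ n) :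
    n * (nthPrime (n + 1) / primeSum n : ℝ) < log (2 * nthPrime n / 5) := by
  have hn' : (300 : ℝ) ≤ n := mod_cast hn
  have hS : (0 : ℝ) < primeSum n := mod_cast primeSum_pos (by lia)
  have hSle : n * ((15 * n - 73) / 8) ≤ (primeSum n : ℝ) := by
    have : 15 * (n : ℝ) ^ 2 ≤ 8 * primeSum n + 73 * n := mod_cast fifteen_mul_sq_le_primeSum n
    linarith
  have hp : (1097 : ℝ) ≤ nthPrime n := by
    have := fifteen_mul_le_four_mul_nthPrime_add n
    exact_mod_cast (show 1097 ≤ nthPrime n by lia)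
  have hq := nthPrime_succ_le_log (show n ≠ 0 by lia)
  have hlog : log (nthPrime n) - 11 / 12 < log (2 * nthPrime n / 5) := by
    rw [show 2 * (nthPrime n : ℝ) / 5 = nthPrime n / (5 / 2) by ring,
      log_div (by linarith) (by norm_num)]
    linarith [log_five_halves_lt]
  have hL := seven_le_log hp
  set L := log (nthPrime n)
  have hqL : (nthPrime (n + 1) : ℝ) ≤ (L - 11 / 12) * ((15 * n - 73) / 8) := by
    nlinarith [mul_nonneg (sub_nonneg.2 hn') (sub_nonneg.2 hL)]
  refine lt_of_le_of_lt ?_ hlog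
  rw [mul_div_assoc', div_le_iff₀ hS]
  calc (n : ℝ) * nthPrime (n + 1) ≤ n * ((L - 11 / 12) * ((15 * n - 73) / 8)) := by gcongr
    _ = (L - 11 / 12) * (n * ((15 * n - 73) / 8)) := by ring
    _ ≤ (L - 11 / 12) * primeSum n := by gcongr; linarith

theorem avgPrime_ratio_pow_lt_of_three_hundred_le {n : ℕ} (hn : 300 ≤ n) :
    (avgPrime (n + 1) / avgPrime n) ^ n < (nthPrime n : ℝ) / 5 := by
  have hn0 : n ≠ 0 := by lia
  have hS : (0 : ℝ) < primeSum n := mod_cast primeSum_pos hn0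
  have hp : (0 : ℝ) < nthPrime n := mod_cast (nthPrime_prime n).pos
  have hratio : avgPrime (n + 1) / avgPrime n =
      (1 + nthPrime (n + 1) / primeSum n : ℝ) / (1 + 1 / n) := by
    rw [avgPrime_succ_div_avgPrime]
    field_simp
  calc (avgPrime (n + 1) / avgPrime n) ^ n
      = (1 + nthPrime (n + 1) / primeSum n : ℝ) ^ n / (1 + 1 / n) ^ n := by rw [hratio, div_pow]
    _ ≤ exp (n * (nthPrime (n + 1) / primeSum n : ℝ)) / 2 := by
      gcongr
      · exact one_add_pow_le_exp_mul (by positivity) n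
      · exact two_le_one_add_one_div_pow hn0
    _ < exp (log (2 * nthPrime n / 5)) / 2 := by
      gcongr
      exact mul_nthPrime_succ_div_primeSum_lt_log hn
    _ = nthPrime n / 5 := by rw [exp_log (by positivity)]; ring

/-! ### Evaluation along an initial list of primes -/

theorem filter_range_eq_map_nth (P : ℕ → Prop) [DecidablePred P] (N : ℕ) :
    (List.range N).filter P = (List.range (Nat.count P N)).map (Nat.nth P) := by
  induction N with
  | zero => simp
  | succ N ih =>
    by_cases hN : P N <;>
      simp [List.range_succ, List.filter_append, Nat.count_succ, hN, ih, Nat.nth_count]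

theorem prime_iff_coprime_factorial {N m : ℕ} (hN : N < m) (hm : m < (N + 1) ^ 2) :
    m.Prime ↔ m.Coprime (Nat.factorial N) := by
  have hm1 : m ≠ 1 := by rintro rfl; simp_all
  rw [Nat.coprime_factorial_iff hm1]
  refine ⟨fun hp => hp.minFac_eq.symm ▸ hN, fun hmin => ?_⟩
  by_contra hp
  have hsq := Nat.minFac_sq_le_self (by lia) hp
  have := Nat.pow_le_pow_left hmin 2
  lia

/-- Tests a relation `r k s a b` at every step along a list of consecutive terms of a sequence: `a`
is the last term consumed, `k` its index, `s` the sum of all terms consumed and `b` the next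
term. -/
def checkConsecutive (r : ℕ → ℕ → ℕ → ℕ → Bool) : ℕ → ℕ → ℕ → List ℕ → Bool
  | _, _, _, [] => true
  | k, s, a, b :: l => r k s a b && checkConsecutive r (k + 1) (s + b) b l

theorem checkConsecutive_nthPrime {r : ℕ → ℕ → ℕ → ℕ → Bool} {k len : ℕ}
    (h : checkConsecutive r k (primeSum k) (nthPrime k)
      ((List.range' k len).map (Nat.nth Nat.Prime)))
    {n : ℕ} (hkn : k ≤ n) (hn : n < k + len) :
    r n (primeSum n) (nthPrime n) (nthPrime (n + 1)) := by
  induction len generalizing k with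
  | zero => lia
  | succ len ih =>
    rw [List.range'_succ, List.map_cons, checkConsecutive, Bool.and_eq_true] at h
    rcases hkn.eq_or_lt with rfl | hlt
    · exact h.1
    · refine ih ?_ hlt (by lia)
      rw [primeSum_succ]
      exact h.2

/-- The pair of integer inequalities behind the theorem at `n ≥ 7`, as a test on `n`, the sum `s` of
the first `n` primes, the `n`-th prime `p` and its successor `q`. -/
def ratioAndSizeTest (n s p q : ℕ) : Bool :=
  n < 7 || (5 * ((s + q) * n) ^ n < p * (s * (n + 1)) ^ n && 32 * p ^ 2 ≤ n ^ 5)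

/-- The primes below `2025 = 45 ^ 2`. Coprimality with `44!` replaces trial division, because the
kernel evaluates `Nat.gcd` natively. -/
def primesBelow2025 : List ℕ :=
  (List.range 2025).filter fun m => if m ≤ 44 then m.Prime else m.Coprime (Nat.factorial 44)

theorem primesBelow2025_eq_map_nth :
    primesBelow2025 = (List.range primesBelow2025.length).map (Nat.nth Nat.Prime) := by
  have hfilter : primesBelow2025 = (List.range 2025).filter Nat.Prime := by
    refine List.filter_congr fun m hm => ?_
    split_ifs with h44
    · rfl
    · exact decide_eq_decide.2
        (prime_iff_coprime_factorial (not_le.1 h44) (List.mem_range.1 hm)).symm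
  have hmap := hfilter.trans (filter_range_eq_map_nth Nat.Prime 2025)
  rwa [show primesBelow2025.length = Nat.count Nat.Prime 2025 by rw [hmap]; simp]

theorem three_hundred_le_length_primesBelow2025 : 300 ≤ primesBelow2025.length := by
  decide +kernel

theorem checkConsecutive_primesBelow2025 :
    checkConsecutive ratioAndSizeTest 0 0 2 primesBelow2025 := by
  decide +kernel

theorem ratio_and_size_of_lt_three_hundred {n : ℕ} (hn : 7 ≤ n) (hlt : n < 300) :
    5 * ((primeSum n + nthPrime (n + 1)) * n) ^ n < nthPrime n * (primeSum n * (n + 1)) ^ n ∧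
      32 * nthPrime n ^ 2 ≤ n ^ 5 := by
  have hcheck := checkConsecutive_primesBelow2025
  rw [primesBelow2025_eq_map_nth, List.range_eq_range', ← Nat.nth_prime_zero_eq_two] at hcheck
  have htest := checkConsecutive_nthPrime hcheck n.zero_le
    (by have := three_hundred_le_length_primesBelow2025; lia)
  simpa [ratioAndSizeTest, hn.not_gt] using htest

theorem avgPrime_ratio_pow_lt_of_lt_three_hundred {n : ℕ} (hn : 7 ≤ n) (hlt : n < 300) :
    (avgPrime (n + 1) / avgPrime n) ^ n < (nthPrime n : ℝ) / 5 := by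
  have hS : (0 : ℝ) < primeSum n := mod_cast primeSum_pos (by lia)
  have hratio : 5 * ((primeSum n + nthPrime (n + 1) : ℝ) * n) ^ n <
      nthPrime n * (primeSum n * (n + 1) : ℝ) ^ n :=
    mod_cast (ratio_and_size_of_lt_three_hundred hn hlt).1
  rw [avgPrime_succ_div_avgPrime, div_pow, div_lt_iff₀ (by positivity)]
  linarith

theorem avgPrime_ratio_pow_lt {n : ℕ} (hn : 7 ≤ n) :
    (avgPrime (n + 1) / avgPrime n) ^ n < (nthPrime n : ℝ) / 5 :=
  (lt_or_ge n 300).elim (avgPrime_ratio_pow_lt_of_lt_three_hundred hn)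
    avgPrime_ratio_pow_lt_of_three_hundred_le

theorem nthPrime_sq_le {n : ℕ} (hn : 7 ≤ n) : 32 * nthPrime n ^ 2 ≤ n ^ 5 :=
  (lt_or_ge n 300).elim (fun hlt => (ratio_and_size_of_lt_three_hundred hn hlt).2)
    fun hge => nthPrime_sq_le_of_thirtyFive_le (by lia)

theorem stmt19 (n : ℕ) (hn : 7 ≤ n) :
    (avgPrime (n + 1) / avgPrime n) ^ n <
      ((nthPrime n : ℝ) / (2 * Real.log (nthPrime n))) * Real.log ((n : ℝ) / 2) := by
  have hp : (1 : ℝ) < nthPrime n := mod_cast (nthPrime_prime n).one_lt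
  have hsq : (nthPrime n : ℝ) ^ 2 ≤ ((n : ℝ) / 2) ^ 5 := by
    have : 32 * (nthPrime n : ℝ) ^ 2 ≤ n ^ 5 := mod_cast nthPrime_sq_le hn
    rw [div_pow]
    linarith
  exact (avgPrime_ratio_pow_lt hn).trans_le (div_five_le_div_two_mul_log_mul_log hp hsq)
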